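/- Let (X, Σ) be a measurable space, p a Markov transition kernel on X, π a probability measure on X, and ρ the probability measure on X × X given by ρ(dx,dy) = π(dx) p(x,dy). Let H be a separable Hilbert space and φ : X → H a bounded measurable map, and define the conditional mean embedding g_p(x) := ∫_X φ(y) p(x,dy) (Bochner integral). Then for every bounded linear operator B : H → H, ∫_{X×X} ‖φ(y) − B φ(x)‖² ρ(dx,dy) = ∫_{X×X} ‖g_p(x) − φ(y)‖² ρ(dx,dy) + ∫_X ‖g_p(x) − B φ(x)‖² π(dx). -/

import Mathlib

open MeasureTheory ProbabilityTheory
open scoped ProbabilityTheory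

/-- For a Markov kernel `p`, a probability measure `π`,
`ρ(dx,dy) = π(dx)p(x,dy)`, a bounded measurable feature map `φ : X → H` into a separable
Hilbert space, and the conditional mean embedding `g_p(x) = ∫ φ(y) p(x,dy)`, for every
bounded operator `B : H → H`:
`∫ ‖φ(y) − B φ(x)‖² dρ = ∫ ‖g_p(x) − φ(y)‖² dρ + ∫ ‖g_p(x) − B φ(x)‖² dπ`. -/
theorem stmt9 {X : Type*} [MeasurableSpace X]
    (p : Kernel X X) [IsMarkovKernel p]
    (π : Measure X) [IsProbabilityMeasure π]
    {H : Type*} [NormedAddCommGroup H] [InnerProductSpace ℝ H] [CompleteSpace H]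
    [TopologicalSpace.SeparableSpace H] [MeasurableSpace H] [BorelSpace H]
    (φ : X → H) (hφm : Measurable φ) (C : ℝ) (hφb : ∀ x, ‖φ x‖ ≤ C)
    (B : H →L[ℝ] H) :
    ∫ z : X × X, ‖φ z.2 - B (φ z.1)‖ ^ 2 ∂(π ⊗ₘ p)
      = ∫ z : X × X, ‖(∫ y, φ y ∂(p z.1)) - φ z.2‖ ^ 2 ∂(π ⊗ₘ p)
        + ∫ x, ‖(∫ y, φ y ∂(p x)) - B (φ x)‖ ^ 2 ∂π := by
  have hsm : StronglyMeasurable φ := hφm.stronglyMeasurable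
  have hint : ∀ x, Integrable φ (p x) := fun x =>
    Integrable.of_bound hsm.aestronglyMeasurable C (Filter.Eventually.of_forall hφb)
  have hgm : StronglyMeasurable (fun x => ∫ y, φ y ∂(p x)) := hsm.integral_kernel
  have hgb : ∀ x, ‖∫ y, φ y ∂(p x)‖ ≤ C := fun x => by
    have := norm_integral_le_of_norm_le_const (μ := p x) (Filter.Eventually.of_forall hφb)
    simpa using this
  have hBb : ∀ x, ‖B (φ x)‖ ≤ ‖B‖ * C := fun x =>
    (B.le_opNorm _).trans (mul_le_mul_of_nonneg_left (hφb x) (norm_nonneg _))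
  have hBm : StronglyMeasurable (fun x => B (φ x)) := B.continuous.comp_stronglyMeasurable hsm
  have key : ∀ {Y : Type _} [MeasurableSpace Y] (μ : Measure Y) [IsProbabilityMeasure μ]
      (u v : Y → H) (a b : ℝ), StronglyMeasurable u → StronglyMeasurable v →
      (∀ y, ‖u y‖ ≤ a) → (∀ y, ‖v y‖ ≤ b) → Integrable (fun y => ‖u y - v y‖ ^ 2) μ := by
    intro Y _ μ _ u v a b hu hv ha hb
    refine Integrable.of_bound ((hu.sub hv).norm.pow 2).aestronglyMeasurable ((a + b) ^ 2)
      (Filter.Eventually.of_forall fun y => ?_)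
    rw [Real.norm_of_nonneg (by positivity)]
    have h : ‖u y - v y‖ ≤ a + b := (norm_sub_le _ _).trans (add_le_add (ha y) (hb y))
    exact pow_le_pow_left₀ (norm_nonneg _) h 2
  have i1 : Integrable (fun z : X × X => ‖φ z.2 - B (φ z.1)‖ ^ 2) (π ⊗ₘ p) :=
    key _ (fun z : X × X => φ z.2) (fun z => B (φ z.1)) _ _ (hsm.comp_measurable measurable_snd)
      (hBm.comp_measurable measurable_fst) (fun z => hφb _) (fun z => hBb _)
  have i2 : Integrable (fun z : X × X => ‖(∫ y, φ y ∂(p z.1)) - φ z.2‖ ^ 2) (π ⊗ₘ p) :=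
    key _ (fun z : X × X => ∫ y, φ y ∂(p z.1)) (fun z => φ z.2) _ _
      (hgm.comp_measurable measurable_fst) (hsm.comp_measurable measurable_snd)
      (fun z => hgb _) (fun z => hφb _)
  have i3 : Integrable (fun x => ‖(∫ y, φ y ∂(p x)) - B (φ x)‖ ^ 2) π :=
    key _ _ _ _ _ hgm hBm hgb hBb
  have i4 : Integrable (fun a => ∫ b, ‖(∫ y, φ y ∂(p (a, b).1)) - φ (a, b).2‖ ^ 2 ∂(p a)) π := by
    have h := i2
    rw [Measure.compProd] at h
    simpa using h.integral_compProd
  rw [Measure.integral_compProd i1, Measure.integral_compProd i2,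
    ← integral_add i4 i3]
  refine integral_congr_ae (Filter.Eventually.of_forall fun x => ?_)
  dsimp only
  set g := ∫ y, φ y ∂(p x) with hg
  have e : ∀ y, ‖φ y - B (φ x)‖ ^ 2
      = ‖g - φ y‖ ^ 2 + (2 * inner ℝ (g - B (φ x)) (φ y - g) + ‖g - B (φ x)‖ ^ 2) := fun y => by
    have : φ y - B (φ x) = (g - B (φ x)) + (φ y - g) := by abel
    rw [this, norm_add_sq_real, norm_sub_rev g (φ y)]
    ring
  have j0 : Integrable (fun y => φ y - g) (p x) := (hint x).sub (integrable_const _)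
  have j1 : Integrable (fun y => 2 * inner ℝ (g - B (φ x)) (φ y - g)) (p x) :=
    (j0.const_inner _).const_mul 2
  have j2 : Integrable (fun y => ‖g - φ y‖ ^ 2) (p x) :=
    key _ (fun _ => g) φ _ _ stronglyMeasurable_const hsm (fun _ => le_rfl) hφb
  have j3 : Integrable (fun y => 2 * inner ℝ (g - B (φ x)) (φ y - g) + ‖g - B (φ x)‖ ^ 2) (p x) :=
    j1.add (integrable_const _)
  simp_rw [e]
  rw [integral_add j2 j3, integral_add j1 (integrable_const _),
    integral_const_mul, integral_inner j0, integral_sub (hint x) (integrable_const _)]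
  simp [← hg]
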